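/- Suppose 1 ≤ i ≤ n−1 and w_i ≠ w_{i+1}. Then both projections Z(k̲)^i_w̲ → Y(k̲)_w̲ (forgetting L'_i) and Z(k̲)^i_w̲ → Y(s_i·k̲)_{s_i·w̲} (forgetting L_i) are bijections; that is, Z(k̲)^i_w̲ is the graph of a bijection between Y(k̲)_w̲ and Y(s_i·k̲)_{s_i·w̲}. -/

import Mathlib

open Polynomial

set_option synthInstance.maxHeartbeats 1000000
set_option maxHeartbeats 1000000

noncomputable section

abbrev KM (m : ℕ) := Fin m → RatFunc ℂ

abbrev SubM (m : ℕ) := Submodule (Polynomial ℂ) (KM m)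

def polyL0 (m : ℕ) : SubM m :=
  Submodule.pi Set.univ fun _ => LinearMap.range (Algebra.linearMap (Polynomial ℂ) (RatFunc ℂ))

abbrev QuotMod (m : ℕ) (A B : SubM m) := ↥B ⧸ (A.comap B.subtype)

def fdim (m : ℕ) (A B : SubM m) : ℕ := Module.finrank ℂ (QuotMod m A B)

def zmul (m : ℕ) (w : ℂ) : KM m →ₗ[Polynomial ℂ] KM m :=
  (Polynomial.X - Polynomial.C w) • LinearMap.id

def quotSmul (m : ℕ) (p : Polynomial ℂ) (A B : SubM m) :
    QuotMod m A B →ₗ[ℂ] QuotMod m A B where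
  toFun v := p • v
  map_add' x y := smul_add p x y
  map_smul' c x := smul_comm p c x

def IsYChain (m n : ℕ) (k : ℕ → ℕ) (w : ℕ → ℂ) (L : ℕ → SubM m) : Prop :=
  L 0 = polyL0 m ∧
  (∀ i < n, L i ≤ L (i + 1)) ∧
  (∀ i < n, FiniteDimensional ℂ (QuotMod m (L i) (L (i + 1)))) ∧
  (∀ i < n, fdim m (L i) (L (i + 1)) = k (i + 1)) ∧
  (∀ i < n, ∀ x ∈ L (i + 1), zmul m (w (i + 1)) x ∈ L i)

/-- `s_i` : exchanging the `i`-th and `(i+1)`-st entries of a sequence. -/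
def swapAt {α : Type*} (i : ℕ) (f : ℕ → α) : ℕ → α :=
  fun j => if j = i then f (i + 1) else if j = i + 1 then f i else f j

/-- The correspondence `Z(k)^i_w ⊆ Y(k)_w × Y(s_i·k)_{s_i·w}`. -/
def IsZPair (m n i : ℕ) (k : ℕ → ℕ) (w : ℕ → ℂ) (L L' : ℕ → SubM m) : Prop :=
  IsYChain m n k w L ∧ IsYChain m n (swapAt i k) (swapAt i w) L' ∧
  ∀ j, j ≠ i → L j = L' j

lemma zmul_sep (m : ℕ) (a b : ℂ) (hab : a ≠ b) (P : SubM m) (x : KM m)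
    (ha : zmul m a x ∈ P) (hb : zmul m b x ∈ P) : x ∈ P := by
  have h := P.smul_mem (Polynomial.C (b - a)⁻¹) (P.sub_mem ha hb)
  have e : Polynomial.C (b - a)⁻¹ • (zmul m a x - zmul m b x) = x := by
    simp only [zmul, LinearMap.smul_apply, LinearMap.id_apply]
    rw [← sub_smul, smul_smul]
    have : (Polynomial.C (b - a)⁻¹ * (X - C a - (X - C b)) : ℂ[X]) = 1 := by
      have h2 : (X - C a - (X - C b) : ℂ[X]) = C (b - a) := by rw [C_sub]; ring
      rw [h2, ← C_mul, inv_mul_cancel₀ (sub_ne_zero.mpr hab.symm), C_1]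
    rw [this, one_smul]
  rwa [e] at h

lemma zmul_comm (m : ℕ) (a b : ℂ) (x : KM m) :
    zmul m a (zmul m b x) = zmul m b (zmul m a x) := by
  simp only [zmul, LinearMap.smul_apply, LinearMap.id_apply]
  exact smul_comm _ _ _

lemma zmul_mem (m : ℕ) (a : ℂ) (P : SubM m) (x : KM m) (h : x ∈ P) : zmul m a x ∈ P := by
  simp only [zmul, LinearMap.smul_apply, LinearMap.id_apply]
  exact P.smul_mem _ h

lemma quot_iso (m : ℕ) (P Q A C : SubM m) (hi : P ⊓ Q = A) (hs : P ⊔ Q = C) :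
    Nonempty (QuotMod m A P ≃ₗ[ℂ] QuotMod m Q C) := by
  subst hi hs
  exact ⟨(LinearMap.quotientInfEquivSupQuotient P Q).restrictScalars ℂ⟩

lemma swap_core (m : ℕ) (a b : ℂ) (hab : a ≠ b) (A B C : SubM m) (hAB : A ≤ B) (hBC : B ≤ C)
    (h1 : ∀ x ∈ B, zmul m a x ∈ A) (h2 : ∀ x ∈ C, zmul m b x ∈ B) :
    ∃ B' : SubM m, A ≤ B' ∧ B' ≤ C ∧ (∀ x ∈ B', zmul m b x ∈ A) ∧ (∀ x ∈ C, zmul m a x ∈ B') ∧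
      Nonempty (QuotMod m B C ≃ₗ[ℂ] QuotMod m A B') ∧
      Nonempty (QuotMod m A B ≃ₗ[ℂ] QuotMod m B' C) := by
  have m1 : ∀ x ∈ C, zmul m a x ∈ C ⊓ A.comap (zmul m b) := fun x hx =>
    ⟨zmul_mem m a C x hx, by
      change zmul m b (zmul m a x) ∈ A
      rw [zmul_comm]
      exact h1 _ (h2 x hx)⟩
  have hi : B ⊓ (C ⊓ A.comap (zmul m b)) = A := by
    apply le_antisymm
    · rintro x ⟨hx, hx', hx2⟩
      exact zmul_sep m a b hab A x (h1 x hx) hx2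
    · exact fun x hx => ⟨hAB hx, hBC (hAB hx), zmul_mem m b A x hx⟩
  have hs : B ⊔ (C ⊓ A.comap (zmul m b)) = C := by
    apply le_antisymm (sup_le hBC inf_le_left)
    intro x hx
    exact zmul_sep m a b hab _ x (Submodule.mem_sup_right (m1 x hx))
      (Submodule.mem_sup_left (h2 x hx))
  refine ⟨C ⊓ A.comap (zmul m b), hi.symm.le.trans inf_le_right, inf_le_left,
    fun x hx => hx.2, m1, ?_, ?_⟩
  · obtain ⟨e⟩ := quot_iso m _ B A C (by rw [inf_comm]; exact hi) (by rw [sup_comm]; exact hs)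
    exact ⟨e.symm⟩
  · exact quot_iso m B _ A C hi hs

lemma swap_unique (m : ℕ) (a b : ℂ) (hab : a ≠ b) (A B B' C : SubM m)
    (hA : A ≤ B') (hC : B ≤ C)
    (h1 : ∀ x ∈ B, zmul m b x ∈ A) (h2 : ∀ x ∈ C, zmul m a x ∈ B') : B ≤ B' :=
  fun x hx => zmul_sep m a b hab B' x (h2 x (hC hx)) (hA (h1 x hx))

lemma swapAt_swapAt {α : Type*} (i : ℕ) (f : ℕ → α) : swapAt i (swapAt i f) = f := by
  funext j
  unfold swapAt
  by_cases h : j = i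
  · simp [h]
  · by_cases h' : j = i + 1 <;> simp [h, h']

lemma half (m n : ℕ) (k : ℕ → ℕ) (w : ℕ → ℂ)
    (i : ℕ) (hi : 1 ≤ i) (hin : i + 1 ≤ n) (hw : w i ≠ w (i + 1))
    (L : ℕ → SubM m) (hL : IsYChain m n k w L) :
    ∃! L' : ℕ → SubM m, IsYChain m n (swapAt i k) (swapAt i w) L' ∧ ∀ j, j ≠ i → L j = L' j := by
  obtain ⟨p, rfl⟩ : ∃ p, i = p + 1 := ⟨i - 1, by omega⟩
  obtain ⟨c0, c1, c2, c3, c4⟩ := hL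
  obtain ⟨B', hA, hC, q1, q2, ⟨e1⟩, ⟨e2⟩⟩ := swap_core m _ _ hw (L p) (L (p+1)) (L (p+1+1))
    (c1 _ (by omega)) (c1 _ (by omega)) (c4 _ (by omega)) (c4 _ (by omega))
  have s1 : ∀ {α : Type} (f : ℕ → α), swapAt (p+1) f (p+1) = f (p+1+1) := by
    intro α f; simp [swapAt]
  have s2 : ∀ {α : Type} (f : ℕ → α), swapAt (p+1) f (p+1+1) = f (p+1) := by
    intro α f; simp [swapAt]
  have s3 : ∀ {α : Type} (f : ℕ → α) (j : ℕ), j ≠ p + 1 → j ≠ p+1+1 →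
      swapAt (p+1) f j = f j := by
    intro α f j h h'; simp only [swapAt, if_neg h, if_neg h']
  have u1 : Function.update L (p+1) B' (p+1) = B' := Function.update_self ..
  have u2 : ∀ j, j ≠ p+1 → Function.update L (p+1) B' j = L j :=
    fun j hj => Function.update_of_ne hj ..
  have f1 := c2 (p+1) (by omega)
  have f2 := c2 p (by omega)
  have key : ∀ j < n, Function.update L (p+1) B' j ≤ Function.update L (p+1) B' (j+1) ∧
      FiniteDimensional ℂ (QuotMod m (Function.update L (p+1) B' j)
        (Function.update L (p+1) B' (j+1))) ∧
      fdim m (Function.update L (p+1) B' j) (Function.update L (p+1) B' (j+1)) =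
        swapAt (p+1) k (j+1) ∧
      ∀ x ∈ Function.update L (p+1) B' (j+1), zmul m (swapAt (p+1) w (j+1)) x ∈
        Function.update L (p+1) B' j := by
    intro j hj
    by_cases h : j = p
    · subst h
      rw [u1, u2 j (by omega), s1, s1]
      exact ⟨hA, e1.finiteDimensional, e1.finrank_eq.symm.trans (c3 _ (by omega)), q1⟩
    by_cases h' : j = p + 1
    · subst h'
      rw [u1, u2 (p+1+1) (by omega), s2, s2]
      exact ⟨hC, e2.finiteDimensional, e2.finrank_eq.symm.trans (c3 _ (by omega)), q2⟩
    rw [u2 j h', u2 (j+1) (by omega), s3 _ _ (by omega) (by omega), s3 _ _ (by omega) (by omega)]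
    exact ⟨c1 j hj, c2 j hj, c3 j hj, c4 j hj⟩
  refine ⟨Function.update L (p+1) B', ⟨⟨?_, fun j hj => (key j hj).1, fun j hj => (key j hj).2.1,
    fun j hj => (key j hj).2.2.1, fun j hj => (key j hj).2.2.2⟩, fun j hj => (u2 j hj).symm⟩, ?_⟩
  · rw [u2 0 (by omega), c0]
  · rintro M ⟨⟨d0, d1, d2, d3, d4⟩, hM⟩
    funext j
    by_cases h : j = p + 1
    · subst h
      rw [u1]
      have g1 := d1 p (by omega)
      have g2 := d1 (p+1) (by omega)
      have g3 := d4 p (by omega)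
      have g4 := d4 (p+1) (by omega)
      rw [← hM p (by omega)] at g1 g3
      rw [← hM (p+1+1) (by omega)] at g2 g4
      rw [s1] at g3
      rw [s2] at g4
      exact le_antisymm (swap_unique m _ _ hw _ _ _ _ hA g2 g3 q2)
        (swap_unique m _ _ hw _ _ _ _ g1 hC q1 g4)
    · rw [u2 j h, hM j h]

/-- if `w_i ≠ w_{i+1}` then both projections from `Z(k)^i_w` are bijections,
i.e. `Z(k)^i_w` is the graph of a bijection `Y(k)_w ↔ Y(s_i·k)_{s_i·w}`. -/
theorem statement4 (m : ℕ) (hm : 2 ≤ m) (n : ℕ) (k : ℕ → ℕ) (w : ℕ → ℂ)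
    (hk : ∀ j, 1 ≤ j → j ≤ n → 1 ≤ k j ∧ k j ≤ m - 1)
    (i : ℕ) (hi : 1 ≤ i) (hin : i + 1 ≤ n) (hw : w i ≠ w (i + 1)) :
    (∀ L : ℕ → SubM m, IsYChain m n k w L →
        ∃! L' : ℕ → SubM m, IsZPair m n i k w L L') ∧
    (∀ L' : ℕ → SubM m, IsYChain m n (swapAt i k) (swapAt i w) L' →
        ∃! L : ℕ → SubM m, IsZPair m n i k w L L') := by
  constructor
  · intro L hL
    obtain ⟨L', h, hu⟩ := half m n k w i hi hin hw L hL
    exact ⟨L', ⟨hL, h⟩, fun M hM => hu M hM.2⟩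
  · intro L hL
    obtain ⟨L', h, hu⟩ := half m n (swapAt i k) (swapAt i w) i hi hin
      (by simpa [swapAt] using hw.symm) L hL
    simp only [swapAt_swapAt] at h hu
    exact ⟨L', ⟨h.1, hL, fun j hj => (h.2 j hj).symm⟩,
      fun M hM => hu M ⟨hM.1, fun j hj => (hM.2.2 j hj).symm⟩⟩
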